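/- For each integer k ≥ 1 the following holds as a polynomial identity in w₁,…,w_{2k}, x, y, u, v and ζ: (x−u)(y−v)·H_{2(k+2)}(w₁,…,w_{2k},x,y,u,v)·H_{2k}(w₁,…,w_{2k}) = h(x,v)h(y,u)·H_{2(k+1)}(w₁,…,w_{2k},u,v)·H_{2(k+1)}(w₁,…,w_{2k},x,y) − h(x,y)h(u,v)·H_{2(k+1)}(w₁,…,w_{2k},y,u)·H_{2(k+1)}(w₁,…,w_{2k},x,v). -/

import Mathlib

noncomputable section

open Complex
open scoped BigOperators

/-- Jacobi theta function `ϑ₁(z|τ)` with nome `p = e^{iπτ}` (Whittaker–Watson convention). -/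
def th1 (z τ : ℂ) : ℂ :=
  -Complex.I * ∑' n : ℤ, (-1 : ℂ) ^ n *
    Complex.exp ((Real.pi : ℂ) * Complex.I * τ * ((n : ℂ) + 1/2) ^ 2 + (2 * (n : ℂ) + 1) * Complex.I * z)

/-- Jacobi theta function `ϑ₂(z|τ)`. -/
def th2 (z τ : ℂ) : ℂ :=
  ∑' n : ℤ,
    Complex.exp ((Real.pi : ℂ) * Complex.I * τ * ((n : ℂ) + 1/2) ^ 2 + (2 * (n : ℂ) + 1) * Complex.I * z)

/-- Jacobi theta function `ϑ₃(z|τ)`. -/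
def th3 (z τ : ℂ) : ℂ :=
  ∑' n : ℤ, Complex.exp ((Real.pi : ℂ) * Complex.I * τ * (n : ℂ) ^ 2 + 2 * (n : ℂ) * Complex.I * z)

/-- Jacobi theta function `ϑ₄(z|τ)`. -/
def th4 (z τ : ℂ) : ℂ :=
  ∑' n : ℤ, (-1 : ℂ) ^ n *
    Complex.exp ((Real.pi : ℂ) * Complex.I * τ * (n : ℂ) ^ 2 + 2 * (n : ℂ) * Complex.I * z)

/-- The crossing parameter `η = π/3`. -/
def ηc : ℂ := (Real.pi : ℂ) / 3

/-- The elliptic nome `p = e^{iπτ}`. -/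
def pnome (τ : ℂ) : ℂ := Complex.exp ((Real.pi : ℂ) * Complex.I * τ)

/-- `ζ = (ϑ₁(η,p²)/ϑ₄(η,p²))²`. -/
def zet (τ : ℂ) : ℂ := (th1 ηc (2 * τ) / th4 ηc (2 * τ)) ^ 2

/-- The nome `p` is real with `0 < p < 1`. -/
def preal (τ : ℂ) : Prop := (pnome τ).im = 0 ∧ 0 < (pnome τ).re ∧ (pnome τ).re < 1

/-- A tuple given by a list of prescribed entries, padded by zeros. -/
def padded {n : ℕ} (l : List ℂ) : Fin n → ℂ := fun j => l.getD (j : ℕ) 0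

/-- Extension of a tuple by a list of prescribed further entries (padded by zeros). -/
def extL {m n : ℕ} (w : Fin m → ℂ) (l : List ℂ) : Fin n → ℂ :=
  fun j => if h : (j : ℕ) < m then w ⟨j, h⟩ else l.getD ((j : ℕ) - m) 0

/-- First `k` entries of a `2k`-tuple. -/
def firstHalf {k : ℕ} (x : Fin (2 * k) → ℂ) : Fin k → ℂ :=
  fun i => x ⟨(i : ℕ), by have := i.2; omega⟩

/-- Last `k` entries of a `2k`-tuple. -/
def secondHalf {k : ℕ} (x : Fin (2 * k) → ℂ) : Fin k → ℂ :=
  fun i => x ⟨k + (i : ℕ), by have := i.2; omega⟩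

/-- `𝕙(x,y) = ϑ₁(x−y+η)ϑ₁(x−y−η)ϑ₁(x+y+η)ϑ₁(x+y−η)`. -/
def hh (τ x y : ℂ) : ℂ :=
  th1 (x - y + ηc) τ * th1 (x - y - ηc) τ * th1 (x + y + ηc) τ * th1 (x + y - ηc) τ

/-- `𝔻(x₁,…,x_k) = ∏_{i<j} ϑ₁(x_j−x_i)ϑ₁(x_j+x_i)`. -/
def vdTheta (τ : ℂ) {k : ℕ} (y : Fin k → ℂ) : ℂ :=
  ∏ i : Fin k, ∏ j : Fin k, if i < j then th1 (y j - y i) τ * th1 (y j + y i) τ else 1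

/-- The elliptic Tsuchiya determinant `ℍ_{2k}(x₁,…,x_k; x_{k+1},…,x_{2k})`. -/
def tsuchiya (τ : ℂ) (k : ℕ) (x : Fin (2 * k) → ℂ) : ℂ :=
  (∏ i : Fin k, ∏ j : Fin k, hh τ (firstHalf x i) (secondHalf x j))
    / (vdTheta τ (firstHalf x) * vdTheta τ (secondHalf x))
    * Matrix.det (Matrix.of fun i j : Fin k => (hh τ (firstHalf x i) (secondHalf x j))⁻¹)

/-- The expression defining the elliptic Tsuchiya determinant is well defined:
the Vandermonde-type denominators and the entries `𝕙(x_i,x_{j+k})` are nonzero. -/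
def tsuDefined (τ : ℂ) (k : ℕ) (x : Fin (2 * k) → ℂ) : Prop :=
  (∀ i j : Fin k, i ≠ j →
    th1 (firstHalf x j - firstHalf x i) τ ≠ 0 ∧ th1 (firstHalf x j + firstHalf x i) τ ≠ 0) ∧
  (∀ i j : Fin k, i ≠ j →
    th1 (secondHalf x j - secondHalf x i) τ ≠ 0 ∧ th1 (secondHalf x j + secondHalf x i) τ ≠ 0) ∧
  (∀ i j : Fin k, hh τ (firstHalf x i) (secondHalf x j) ≠ 0)

/-- `h(w,w') = 1 − (3+ζ²)ww' + (1−ζ²)ww'(w+w')`. -/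
def hpol (ζ w w' : ℂ) : ℂ := 1 - (3 + ζ ^ 2) * w * w' + (1 - ζ ^ 2) * w * w' * (w + w')

/-- Vandermonde product `Δ(w₁,…,w_k) = ∏_{i<j}(w_j − w_i)`. -/
def vdm {k : ℕ} (y : Fin k → ℂ) : ℂ :=
  ∏ i : Fin k, ∏ j : Fin k, if i < j then y j - y i else 1

/-- The determinant-ratio expression defining the polynomial `H_{2k}`. -/
def Hratio (ζ : ℂ) (k : ℕ) (w : Fin (2 * k) → ℂ) : ℂ :=
  (∏ i : Fin k, ∏ j : Fin k, hpol ζ (firstHalf w i) (secondHalf w j))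
    / (vdm (firstHalf w) * vdm (secondHalf w))
    * Matrix.det (Matrix.of fun i j : Fin k => (hpol ζ (firstHalf w i) (secondHalf w j))⁻¹)

/-- The expression `Hratio` is well defined at `w`. -/
def HratioDefined (ζ : ℂ) (k : ℕ) (w : Fin (2 * k) → ℂ) : Prop :=
  (∀ i j : Fin k, i ≠ j → firstHalf w i ≠ firstHalf w j) ∧
  (∀ i j : Fin k, i ≠ j → secondHalf w i ≠ secondHalf w j) ∧
  (∀ i j : Fin k, hpol ζ (firstHalf w i) (secondHalf w j) ≠ 0)

/-- `H` is the family of Rosengren–Zinn-Justin polynomials `H_{2k}` for parameter `ζ`: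
for each `k`, `H k` is a polynomial function of the `2k` variables agreeing with the
determinant-ratio formula wherever the latter is defined, and `H 0 = 1`. -/
def IsHFamily (ζ : ℂ) (H : (k : ℕ) → (Fin (2 * k) → ℂ) → ℂ) : Prop :=
  (∀ w, H 0 w = 1) ∧
  (∀ k : ℕ, ∃ P : MvPolynomial (Fin (2 * k)) ℂ, ∀ w, H k w = MvPolynomial.eval w P) ∧
  (∀ (k : ℕ) (w : Fin (2 * k) → ℂ), HratioDefined ζ k w → H k w = Hratio ζ k w)

/-- Vertex weight `a(u)`. -/
def av (τ u : ℂ) : ℂ := th4 (2*ηc) (2*τ) * th1 (u + 2*ηc) (2*τ) * th4 u (2*τ)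
/-- Vertex weight `b(u)`. -/
def bv (τ u : ℂ) : ℂ := th4 (2*ηc) (2*τ) * th4 (u + 2*ηc) (2*τ) * th1 u (2*τ)
/-- Vertex weight `c(u)`. -/
def cv (τ u : ℂ) : ℂ := th1 (2*ηc) (2*τ) * th4 (u + 2*ηc) (2*τ) * th4 u (2*τ)
/-- Vertex weight `d(u)`. -/
def dv (τ u : ℂ) : ℂ := th1 (2*ηc) (2*τ) * th1 (u + 2*ηc) (2*τ) * th1 u (2*τ)
/-- `r(u) = a(u) + b(u)`. -/
def rv (τ u : ℂ) : ℂ := av τ u + bv τ u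

/-- Entries of the `R`-matrix of the eight-vertex model, in the basis `{↑↑,↑↓,↓↑,↓↓}`
identified with `Fin 2 × Fin 2` (`↑ = 0`, `↓ = 1`). -/
def Rent (τ u : ℂ) (p q : Fin 2 × Fin 2) : ℂ :=
  if p = q then (if p.1 = p.2 then av τ u else bv τ u)
  else if q = (p.2, p.1) then cv τ u
  else if p.1 = p.2 ∧ q.1 = q.2 then dv τ u
  else 0

/-- Entries of `Ř(u) = 𝒫 R(u)`. -/
def Rcheckent (τ u : ℂ) (p q : Fin 2 × Fin 2) : ℂ := Rent τ u (p.2, p.1) q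

/-- The boundary vector `χ(x) ∈ ℂ²⊗ℂ²`. -/
def chiV (τ lam x : ℂ) : Fin 2 × Fin 2 → ℂ := fun p =>
  if p = ((0 : Fin 2), (1 : Fin 2)) then th1 (x + lam) (2*τ) * th4 (x - lam - 2*ηc) (2*τ)
  else if p = ((1 : Fin 2), (0 : Fin 2)) then th1 (x - lam - 2*ηc) (2*τ) * th4 (x + lam) (2*τ)
  else 0

/-- The boundary vector `χ̄(x) ∈ ℂ²⊗ℂ²`. -/
def chibarV (τ lam x : ℂ) : Fin 2 × Fin 2 → ℂ := fun p =>
  if p = ((0 : Fin 2), (0 : Fin 2)) then th1 (x + lam) (2*τ) * th1 (x - lam - 2*ηc) (2*τ)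
  else if p = ((1 : Fin 2), (1 : Fin 2)) then th4 (x - lam - 2*ηc) (2*τ) * th4 (x + lam) (2*τ)
  else 0

/-- A family `Ψ_n(u₁,…,u_{2n+1}) ∈ (ℂ²)^{⊗(2n+1)}`, represented by its components
with respect to spin configurations `α : Fin (2n+1) → Fin 2` (`↑ = 0`, `↓ = 1`). -/
abbrev PsiFam := (n : ℕ) → (Fin (2 * n + 1) → ℂ) → (Fin (2 * n + 1) → Fin 2) → ℂ

/-- The action of `Ř(u)` on tensor factors `i`, `j` of `(ℂ²)^{⊗L}`. -/
def applyRc (τ u : ℂ) {L : ℕ} (i j : Fin L) (ψ : (Fin L → Fin 2) → ℂ) :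
    (Fin L → Fin 2) → ℂ := fun α =>
  ∑ s : Fin 2, ∑ t : Fin 2,
    Rcheckent τ u (α i, α j) (s, t) * ψ (Function.update (Function.update α i s) j t)

/-- Spin flip. -/
def flipS : Fin 2 → Fin 2 := fun s => if s = 0 then 1 else 0

/-- Components of the singlet `s = ↑↓ − ↓↑`. -/
def singletC : Fin 2 → Fin 2 → ℂ := fun s t =>
  if s = 0 ∧ t = 1 then 1 else if s = 1 ∧ t = 0 then -1 else 0

/-- Delete the entries at positions `i`, `i+1` from a tuple. -/
def delTwo {α : Type*} {n : ℕ} (i : ℕ) (u : Fin (2 * (n + 1) + 1) → α) : Fin (2 * n + 1) → α :=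
  fun j => if _h : (j : ℕ) < i then u ⟨j, by have := j.2; omega⟩
           else u ⟨(j : ℕ) + 2, by have := j.2; omega⟩

/-- The components of `Ψ_n` are entire functions of each `u_i`. -/
def PsiEntire (Ψ : PsiFam) : Prop :=
  ∀ (n : ℕ) (u : Fin (2*n+1) → ℂ) (i : Fin (2*n+1)) (α : Fin (2*n+1) → Fin 2),
    Differentiable ℂ fun z => Ψ n (Function.update u i z) α

/-- (P1): the exchange relations. -/
def PsiP1 (τ : ℂ) (Ψ : PsiFam) : Prop :=
  ∀ (n : ℕ) (u : Fin (2*n+1) → ℂ) (i j : Fin (2*n+1)), (j : ℕ) = (i : ℕ) + 1 →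
    applyRc τ (u j - u i) i j (Ψ n u)
      = fun α => rv τ (u j - u i) * Ψ n (fun l => u (Equiv.swap i j l)) α

/-- (P2): local spin flips. -/
def PsiP2 (τ : ℂ) (Ψ : PsiFam) : Prop :=
  ∀ (n : ℕ) (u : Fin (2*n+1) → ℂ) (i : Fin (2*n+1)) (α : Fin (2*n+1) → Fin 2),
    Ψ n u (Function.update α i (flipS (α i)))
      = (-(pnome τ)) ^ n * Complex.exp (-Complex.I * ∑ j, (u j - u i))
        * Ψ n (Function.update u i (u i + Real.pi * τ)) α

/-- (P3): quasi-periodicity of `Ψ_n` in each `u_i`. -/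
def PsiP3 (τ : ℂ) (Ψ : PsiFam) : Prop :=
  ∀ (n : ℕ) (u : Fin (2*n+1) → ℂ) (i : Fin (2*n+1)),
    (Ψ n (Function.update u i (u i + Real.pi))
      = fun α => (∏ j ∈ Finset.univ.erase i, (if α j = 0 then (1:ℂ) else -1)) * Ψ n u α) ∧
    (Ψ n (Function.update u i (u i + 2 * Real.pi * τ))
      = fun α => (pnome τ ^ (4*n))⁻¹ *
          Complex.exp (-2 * Complex.I * ∑ j, (u i - u j)) * Ψ n u α)

/-- (P4): the wheel condition. -/
def PsiP4 (Ψ : PsiFam) : Prop :=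
  ∀ (n : ℕ) (u : Fin (2*n+1) → ℂ),
    (∃ i j k : Fin (2*n+1), i < j ∧ j < k ∧ u j = u i + 2*ηc ∧ u k = u i + 4*ηc) →
    Ψ n u = 0

/-- (P5): the reduction relations. -/
def PsiP5 (τ : ℂ) (Ψ : PsiFam) : Prop :=
  ∀ (n : ℕ) (u : Fin (2*(n+1)+1) → ℂ) (i : ℕ) (hi : i + 1 < 2*(n+1)+1),
    u ⟨i+1, hi⟩ = u ⟨i, by omega⟩ + 2*ηc →
    Ψ (n+1) u = fun α =>
      (∏ j ∈ (Finset.univ.erase (⟨i, by omega⟩ : Fin (2*(n+1)+1))).erase ⟨i+1, hi⟩,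
          th1 (u ⟨i, by omega⟩ - u j - 2*ηc) τ)
        * singletC (α ⟨i, by omega⟩) (α ⟨i+1, hi⟩)
        * Ψ n (delTwo i u) (delTwo i α)

/-- (P6): `Ψ₀ = ↑ + ↓`. -/
def PsiP6 (Ψ : PsiFam) : Prop := ∀ u α, Ψ 0 u α = 1

/-- The inhomogeneity parameters `(x₁,−x₁,…,x_n,−x_n,0)`. -/
def interleave {n : ℕ} (x : Fin n → ℂ) : Fin (2*n+1) → ℂ := fun j =>
  if h : (j : ℕ) < 2*n then
    (if (j : ℕ) % 2 = 0 then x ⟨(j:ℕ)/2, by omega⟩ else -x ⟨(j:ℕ)/2, by omega⟩)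
  else 0

/-- Components of `χ(x)`. -/
def chiC (τ lam x : ℂ) (s t : Fin 2) : ℂ :=
  if s = 0 ∧ t = 1 then th1 (x + lam) (2*τ) * th4 (x - lam - 2*ηc) (2*τ)
  else if s = 1 ∧ t = 0 then th1 (x - lam - 2*ηc) (2*τ) * th4 (x + lam) (2*τ)
  else 0

/-- Components of `χ̄(x)`. -/
def chibarC (τ lam x : ℂ) (s t : Fin 2) : ℂ :=
  if s = 0 ∧ t = 0 then th1 (x + lam) (2*τ) * th1 (x - lam - 2*ηc) (2*τ)
  else if s = 1 ∧ t = 1 then th4 (x - lam - 2*ηc) (2*τ) * th4 (x + lam) (2*τ)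
  else 0

/-- The scalar product `Z_n(x₁,…,x_n) = ⟨ξ_n(x₁,…,x_n), Ψ_n(x₁,−x₁,…,x_n,−x_n,0)⟩`. -/
def Zfun (τ lam : ℂ) (Ψ : PsiFam) (n : ℕ) (x : Fin n → ℂ) : ℂ :=
  ∑ α : Fin (2*n+1) → Fin 2,
    (∏ m : Fin n, chiC τ lam (x m)
        (α ⟨2*(m:ℕ), by have := m.2; omega⟩) (α ⟨2*(m:ℕ)+1, by have := m.2; omega⟩))
      * (if α ⟨2*n, by omega⟩ = 0 then (1:ℂ) else 0)
      * Ψ n (interleave x) α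

/-- The scalar product `Z̄_n^±(x₁,…,x_n)`, with `ε = ±1`. -/
def Zbarfun (τ lam ε : ℂ) (Ψ : PsiFam) (n : ℕ) (x : Fin n → ℂ) : ℂ :=
  ∑ α : Fin (2*n+1) → Fin 2,
    (∏ m : Fin n, chibarC τ lam (x m)
        (α ⟨2*(m:ℕ), by have := m.2; omega⟩) (α ⟨2*(m:ℕ)+1, by have := m.2; omega⟩))
      * (if α ⟨2*n, by omega⟩ = 0 then (1:ℂ) else ε)
      * Ψ n (interleave x) α

/-- The normalisation constant `𝒩_n`. -/
def Ncoef (τ : ℂ) (n : ℕ) : ℂ :=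
  (-1 : ℂ) ^ ((n+1)/2) * (th1 ηc τ ^ (n^2))⁻¹ * (th4 0 (2*τ) / th4 ηc (2*τ)) ^ (n*(n+1)/2)

/-- The vector `ψ_n = 𝒩_n Ψ_n(0,…,0)`. -/
def psiH (τ : ℂ) (Ψ : PsiFam) (n : ℕ) (α : Fin (2*n+1) → Fin 2) : ℂ :=
  Ncoef τ n * Ψ n (fun _ => 0) α

/-- The scalar product `S_n(μ) = ((⟨↑↓| + μ⟨↓↑|)^{⊗n} ⊗ ⟨↑|) ψ_n`. -/
def Sfun (τ : ℂ) (Ψ : PsiFam) (n : ℕ) (μ : ℂ) : ℂ :=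
  ∑ α : Fin (2*n+1) → Fin 2,
    (∏ m : Fin n,
      (if α ⟨2*(m:ℕ), by have := m.2; omega⟩ = 0 ∧ α ⟨2*(m:ℕ)+1, by have := m.2; omega⟩ = 1
        then (1:ℂ)
       else if α ⟨2*(m:ℕ), by have := m.2; omega⟩ = 1 ∧ α ⟨2*(m:ℕ)+1, by have := m.2; omega⟩ = 0
        then μ
       else 0))
      * (if α ⟨2*n, by omega⟩ = 0 then (1:ℂ) else 0) * psiH τ Ψ n α

/-- The scalar product `S̄_n^±(ν) = ((⟨↑↑| + ν⟨↓↓|)^{⊗n} ⊗ (⟨↑| ± ⟨↓|)) ψ_n`, with `ε = ±1`. -/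
def Sbarfun (τ ε : ℂ) (Ψ : PsiFam) (n : ℕ) (ν : ℂ) : ℂ :=
  ∑ α : Fin (2*n+1) → Fin 2,
    (∏ m : Fin n,
      (if α ⟨2*(m:ℕ), by have := m.2; omega⟩ = 0 ∧ α ⟨2*(m:ℕ)+1, by have := m.2; omega⟩ = 0
        then (1:ℂ)
       else if α ⟨2*(m:ℕ), by have := m.2; omega⟩ = 1 ∧ α ⟨2*(m:ℕ)+1, by have := m.2; omega⟩ = 1
        then ν
       else 0))
      * (if α ⟨2*n, by omega⟩ = 0 then (1:ℂ) else ε) * psiH τ Ψ n α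

/-- The alternating spin configuration `↑↓↑↓⋯↑`. -/
def altConf {L : ℕ} : Fin L → Fin 2 := fun j => if (j : ℕ) % 2 = 0 then 0 else 1

/-- The fully polarised spin configuration `↓⋯↓`. -/
def downConf {L : ℕ} : Fin L → Fin 2 := fun _ => 1

/-- The spin configuration `↑⋯↑↓` with a single `↓` at the last site. -/
def lastDownConf {n : ℕ} : Fin (2*n+1) → Fin 2 := fun j => if (j : ℕ) = 2*n then 1 else 0

/-- `J₂ = −1/2`. -/
def J2c : ℂ := -(1/2)
/-- `J₃ = 1/(1+ζ)`. -/
def J3c (ζ : ℂ) : ℂ := 1/(1+ζ)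
/-- `J₄ = 1/(1−ζ)`. -/
def J4c (ζ : ℂ) : ℂ := 1/(1-ζ)
/-- `μ̄ = (μ−1)²/((ζ²−1)μ)`. -/
def mubar (ζ μ : ℂ) : ℂ := (μ - 1)^2 / ((ζ^2 - 1)*μ)
/-- `ν̄ = (ν−ζ)(νζ−1)/((ζ²−1)ν)`. -/
def nubar (ζ ν : ℂ) : ℂ := (ν - ζ)*(ν*ζ - 1) / ((ζ^2 - 1)*ν)

/-- The elliptic function `w(x)`. -/
def wfun (τ x : ℂ) : ℂ :=
  th4 ηc (2*τ) / th4 0 (2*τ) * th1 x τ ^ 2 / (th1 (x - ηc) τ * th1 (x + ηc) τ)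

/-- `β₂ = η + π/2`. -/
def β2c : ℂ := ηc + (Real.pi : ℂ)/2
/-- `β₃ = η + π/2 + πτ/2`. -/
def β3c (τ : ℂ) : ℂ := ηc + (Real.pi : ℂ)/2 + (Real.pi : ℂ)*τ/2
/-- `β₄ = η + πτ/2`. -/
def β4c (τ : ℂ) : ℂ := ηc + (Real.pi : ℂ)*τ/2

/-- `f` is an (even) theta function of degree `m`, nome `p = e^{iπτ}` and norm `0`
with respect to each of its variables. -/
def ThetaLike (τ : ℂ) (m : ℕ) {n : ℕ} (X : (Fin n → ℂ) → ℂ) : Prop :=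
  ∀ (x : Fin n → ℂ) (i : Fin n),
    Differentiable ℂ (fun z => X (Function.update x i z)) ∧
    (∀ z, X (Function.update x i (z + Real.pi)) = X (Function.update x i z)) ∧
    (∀ z, X (Function.update x i (z + Real.pi * τ))
        = ((-(pnome τ)) ^ m)⁻¹ * Complex.exp (-2 * Complex.I * ((m : ℂ) * z))
            * X (Function.update x i z)) ∧
    (∀ z, X (Function.update x i (-z)) = X (Function.update x i z))

/-!
Up to the factor `a * b`, the polynomial `hpol ζ a b` is the divided difference of a rational
function `f` of one variable. Hence `Hratio ζ k` is, up to a symmetric factor, the quotient of two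
alternating functions of all `2k` variables: a determinant whose rows consist of the numbers `f(w)ⁿ`
and `w f(w)ⁿ` for `n < k`, and the Vandermonde determinant. So `H k` is symmetric on generic tuples,
and by density on all tuples.

By symmetry the variables may be redistributed so that `x, u` join the first half of the tuple and
`y, v` the second one. On generic tuples the identity is then the Desnanot–Jacobi identity for the
matrix of the reciprocals of `hpol`, taken with respect to the two rows `x, u` and the two columns
`y, v`, and it extends to all tuples by density.
-/

section Sylvester

/-- The top-left block of `M` bordered by the row `i` and the column `j` of the other block index
`l`. The determinants of these submatrices enter Sylvester's determinant identity. -/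
def borderedSubmatrix {R m l : Type*} (M : Matrix (m ⊕ l) (m ⊕ l) R) (i j : l) :
    Matrix (m ⊕ Fin 1) (m ⊕ Fin 1) R :=
  M.submatrix (Sum.map id fun _ => i) (Sum.map id fun _ => j)

variable {R S m l : Type*} [CommRing R] [CommRing S] [Fintype m] [DecidableEq m]

theorem det_borderedSubmatrix_map (f : R →+* S) (M : Matrix (m ⊕ l) (m ⊕ l) R) (i j : l) :
    (borderedSubmatrix (M.map f) i j).det = f (borderedSubmatrix M i j).det :=
  (f.map_det (borderedSubmatrix M i j)).symm

theorem det_borderedSubmatrix_fromBlocks (A : Matrix m m R) (B : Matrix m l R)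
    (C : Matrix l m R) (D : Matrix l l R) [Invertible A] (i j : l) :
    (borderedSubmatrix (Matrix.fromBlocks A B C D) i j).det
      = A.det * (D - C * ⅟A * B) i j := by
  have hblocks : borderedSubmatrix (Matrix.fromBlocks A B C D) i j
      = Matrix.fromBlocks A (B.submatrix id fun _ => j) (C.submatrix (fun _ => i) id)
        (D.submatrix (fun _ => i) fun _ => j) := by
    ext (_ | _) (_ | _) <;> rfl
  rw [hblocks, Matrix.det_fromBlocks₁₁, Matrix.det_fin_one]
  rfl

variable [Fintype l] [DecidableEq l]

theorem det_of_det_borderedSubmatrix_of_isUnit [Nonempty l] (M : Matrix (m ⊕ l) (m ⊕ l) R)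
    (hM : IsUnit M.toBlocks₁₁.det) :
    (Matrix.of fun i j => (borderedSubmatrix M i j).det).det
      = M.det * M.toBlocks₁₁.det ^ (Fintype.card l - 1) := by
  obtain ⟨A, B, C, D, rfl⟩ : ∃ A B C D, M = Matrix.fromBlocks A B C D :=
    ⟨_, _, _, _, M.fromBlocks_toBlocks.symm⟩
  rw [Matrix.toBlocks_fromBlocks₁₁] at hM ⊢
  let _ : Invertible A := A.invertibleOfIsUnitDet hM
  have hminors : (Matrix.of fun i j => (borderedSubmatrix (Matrix.fromBlocks A B C D) i j).det)
      = A.det • (D - C * ⅟A * B) :=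
    Matrix.ext fun i j => det_borderedSubmatrix_fromBlocks A B C D i j
  rw [hminors, Matrix.det_smul, Matrix.det_fromBlocks₁₁, mul_right_comm,
    mul_pow_sub_one Fintype.card_ne_zero]

theorem det_of_det_borderedSubmatrix_of_mem_nonZeroDivisors [Nonempty l]
    (M : Matrix (m ⊕ l) (m ⊕ l) R) (hM : M.toBlocks₁₁.det ∈ nonZeroDivisors R) :
    (Matrix.of fun i j => (borderedSubmatrix M i j).det).det
      = M.det * M.toBlocks₁₁.det ^ (Fintype.card l - 1) := by
  let f := algebraMap R (FractionRing R)
  have hblock : f M.toBlocks₁₁.det = (M.map f).toBlocks₁₁.det := f.map_det _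
  have hunit : IsUnit (M.map f).toBlocks₁₁.det := by
    rw [← hblock]
    exact IsLocalization.map_units (FractionRing R) ⟨_, hM⟩
  apply IsFractionRing.injective R (FractionRing R)
  calc f (Matrix.of fun i j => (borderedSubmatrix M i j).det).det
      = (Matrix.of fun i j => (borderedSubmatrix (M.map f) i j).det).det := by
        rw [f.map_det]
        exact congrArg Matrix.det (Matrix.ext fun i j => (det_borderedSubmatrix_map f M i j).symm)
    _ = (M.map f).det * (M.map f).toBlocks₁₁.det ^ (Fintype.card l - 1) :=
        det_of_det_borderedSubmatrix_of_isUnit _ hunit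
    _ = f (M.det * M.toBlocks₁₁.det ^ (Fintype.card l - 1)) := by
        rw [f.map_mul, f.map_pow, hblock, f.map_det]
        rfl

/-- Sylvester's determinant identity. -/
theorem det_of_det_borderedSubmatrix [Nonempty l] (M : Matrix (m ⊕ l) (m ⊕ l) R) :
    (Matrix.of fun i j => (borderedSubmatrix M i j).det).det
      = M.det * M.toBlocks₁₁.det ^ (Fintype.card l - 1) := by
  -- Adding `X` to the diagonal of the top-left block makes its determinant monic in `X`.
  let N : Matrix (m ⊕ l) (m ⊕ l) (Polynomial R) :=
    Matrix.fromBlocks (-M.toBlocks₁₁).charmatrix (M.toBlocks₁₂.map Polynomial.C)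
      (M.toBlocks₂₁.map Polynomial.C) (M.toBlocks₂₂.map Polynomial.C)
  let ev := Polynomial.evalRingHom (0 : R)
  have hN : N.toBlocks₁₁.det ∈ nonZeroDivisors (Polynomial R) :=
    (Matrix.charpoly_monic (-M.toBlocks₁₁)).mem_nonZeroDivisors
  have hev : N.map ev = M := by
    ext (i | i) (j | j) <;>
      simp [N, ev, Matrix.charmatrix_apply, Matrix.diagonal_apply, apply_ite, Matrix.toBlocks₁₁,
        Matrix.toBlocks₁₂, Matrix.toBlocks₂₁, Matrix.toBlocks₂₂]
  calc (Matrix.of fun i j => (borderedSubmatrix M i j).det).det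
      = ev (Matrix.of fun i j => (borderedSubmatrix N i j).det).det := by
        rw [ev.map_det, ← hev]
        exact congrArg Matrix.det (Matrix.ext (det_borderedSubmatrix_map ev N))
    _ = ev (N.det * N.toBlocks₁₁.det ^ (Fintype.card l - 1)) := by
        rw [det_of_det_borderedSubmatrix_of_mem_nonZeroDivisors N hN]
    _ = (N.map ev).det * (N.map ev).toBlocks₁₁.det ^ (Fintype.card l - 1) := by
        rw [ev.map_mul, ev.map_pow, ev.map_det, ev.map_det]
        rfl
    _ = M.det * M.toBlocks₁₁.det ^ (Fintype.card l - 1) := by rw [hev]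

/-- The Desnanot–Jacobi identity. -/
theorem det_mul_det_toBlocks₁₁ (M : Matrix (m ⊕ Fin 2) (m ⊕ Fin 2) R) :
    M.det * M.toBlocks₁₁.det = (borderedSubmatrix M 0 0).det * (borderedSubmatrix M 1 1).det
      - (borderedSubmatrix M 0 1).det * (borderedSubmatrix M 1 0).det := by
  have h := det_of_det_borderedSubmatrix M
  rw [Matrix.det_fin_two, Fintype.card_fin, pow_one] at h
  exact h.symm

end Sylvester

section DoubleVandermonde

theorem prod_prod_erase_sub {R : Type*} [CommRing R] {m : ℕ} (x : Fin m → R) :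
    ∏ i, ∏ j ∈ Finset.univ.erase i, (x i - x j)
      = (-1) ^ m.choose 2 * (Matrix.vandermonde x).det ^ 2 := by
  have hsign : (-1 : R) ^ m.choose 2 = ∏ i : Fin m, ∏ _j ∈ Finset.Ioi i, (-1) := by
    simp only [Finset.prod_const, Fin.card_Ioi]
    rw [Finset.prod_pow_eq_pow_sum, Fin.sum_univ_eq_sum_range (fun i => m - 1 - i),
      Finset.sum_range_reflect (fun i => i), Finset.sum_range_id, Nat.choose_two_right]
  calc ∏ i, ∏ j ∈ Finset.univ.erase i, (x i - x j)
      = ∏ i, ∏ j ∈ Finset.Ioi i, (x i - x j) * (x j - x i) := by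
        simp only [← Finset.compl_singleton]
        exact (Finset.prod_prod_Ioi_mul_eq_prod_prod_off_diag fun i j => x j - x i).symm
    _ = ∏ i, ∏ j ∈ Finset.Ioi i, -1 * (x j - x i) ^ 2 :=
        Finset.prod_congr rfl fun i _ => Finset.prod_congr rfl fun j _ => by ring
    _ = (-1) ^ m.choose 2 * (Matrix.vandermonde x).det ^ 2 := by
        simp only [hsign, Matrix.det_vandermonde, Finset.prod_mul_distrib, Finset.prod_pow]

/-- The square matrix whose row at `r` is `1, x, …, x ^ (m - 1), p, p x, …, p x ^ (m - 1)`, with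
`x = x r` and `p = p r`. -/
def doubleVandermonde {R : Type*} [CommRing R] {m : ℕ} (p x : Fin m ⊕ Fin m → R) :
    Matrix (Fin m ⊕ Fin m) (Fin m ⊕ Fin m) R :=
  Matrix.of fun r => Sum.elim (fun j => x r ^ (j : ℕ)) fun j => p r * x r ^ (j : ℕ)

theorem det_doubleVandermonde_comp_perm {R : Type*} [CommRing R] {m : ℕ}
    (p x : Fin m ⊕ Fin m → R) (σ : Equiv.Perm (Fin m ⊕ Fin m)) :
    (doubleVandermonde (p ∘ σ) (x ∘ σ)).det
      = Equiv.Perm.sign σ * (doubleVandermonde p x).det :=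
  Matrix.det_permute σ (doubleVandermonde p x)

variable {K : Type*} [Field K] {m : ℕ}

theorem lagrangeBasis_mul_vandermonde {x : Fin m → K} (hx : Function.Injective x)
    (y : Fin m → K) :
    (Matrix.of fun j i => (Lagrange.basis Finset.univ x i).eval (y j)) * Matrix.vandermonde x
      = Matrix.vandermonde y := by
  ext j n
  have hX : (Polynomial.X ^ (n : ℕ) : Polynomial K)
      = Lagrange.interpolate Finset.univ x fun i => x i ^ (n : ℕ) := by
    simpa using Lagrange.eq_interpolate (s := Finset.univ) (v := x)
      (f := (Polynomial.X ^ (n : ℕ) : Polynomial K)) hx.injOn (by simp)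
  simpa [Matrix.mul_apply, Polynomial.eval_finsetSum, mul_comm] using
    (congrArg (Polynomial.eval (y j)) hX).symm

theorem det_doubleVandermonde_eq_lagrangeBasis {p x : Fin m ⊕ Fin m → K}
    (hx : Function.Injective (x ∘ Sum.inl)) :
    (doubleVandermonde p x).det = (Matrix.vandermonde (x ∘ Sum.inl)).det ^ 2 *
      (Matrix.of fun j i => (p (.inr j) - p (.inl i)) *
        (Lagrange.basis Finset.univ (x ∘ Sum.inl) i).eval (x (.inr j))).det := by
  set V := Matrix.vandermonde (x ∘ Sum.inl)
  let L : Matrix (Fin m) (Fin m) K :=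
    Matrix.of fun j i => (Lagrange.basis Finset.univ (x ∘ Sum.inl) i).eval (x (.inr j))
  let P := Matrix.diagonal (p ∘ Sum.inl)
  let Q := Matrix.diagonal (p ∘ Sum.inr)
  have hfactor : doubleVandermonde p x
      = Matrix.fromBlocks 1 P L (Q * L) * Matrix.fromBlocks V 0 0 V := by
    have hLV : L * V = Matrix.vandermonde (x ∘ Sum.inr) := lagrangeBasis_mul_vandermonde hx _
    rw [Matrix.fromBlocks_multiply]
    simp only [Matrix.one_mul, Matrix.mul_zero, add_zero, zero_add, Matrix.mul_assoc, hLV]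
    ext (i | i) (j | j) <;> simp [doubleVandermonde, P, Q, V]
  have hentries : Q * L - L * P = Matrix.of fun j i => (p (.inr j) - p (.inl i)) * L j i := by
    ext j i
    simp only [P, Q, Matrix.sub_apply, Matrix.diagonal_mul, Matrix.mul_diagonal, Matrix.of_apply,
      Function.comp_apply]
    ring
  rw [hfactor, Matrix.det_mul, Matrix.det_fromBlocks_one₁₁, Matrix.det_fromBlocks_zero₁₂, hentries]
  simp only [L, Matrix.of_apply]
  ring

theorem det_vandermonde_sq_mul_prod_nodalWeight {x : Fin m → K} (hx : Function.Injective x) :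
    (Matrix.vandermonde x).det ^ 2 * ∏ i, Lagrange.nodalWeight Finset.univ x i
      = (-1) ^ m.choose 2 := by
  have hdet : (Matrix.vandermonde x).det ≠ 0 := Matrix.det_vandermonde_ne_zero_iff.2 hx
  simp only [Lagrange.nodalWeight, Finset.prod_inv_distrib]
  rw [prod_prod_erase_sub, mul_inv, ← inv_pow, inv_neg_one]
  field_simp

theorem det_doubleVandermonde {p x : Fin m ⊕ Fin m → K} (hx : Function.Injective x) :
    (doubleVandermonde p x).det
      = (-1) ^ m.choose 2 * (∏ j, ∏ i, (x (.inr j) - x (.inl i))) *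
        (Matrix.of fun j i =>
          (p (.inr j) - p (.inl i)) / (x (.inr j) - x (.inl i))).det := by
  have hinl : Function.Injective (x ∘ Sum.inl) := hx.comp Sum.inl_injective
  have hentry : ∀ i j, (p (.inr j) - p (.inl i)) *
        (Lagrange.basis Finset.univ (x ∘ Sum.inl) i).eval (x (.inr j))
      = (∏ i, (x (.inr j) - x (.inl i))) * (Lagrange.nodalWeight Finset.univ (x ∘ Sum.inl) i *
        ((p (.inr j) - p (.inl i)) / (x (.inr j) - x (.inl i)))) := fun i j => by
    rw [Lagrange.eval_basis_not_at_node (Finset.mem_univ i) (hx.ne Sum.inr_ne_inl),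
      Lagrange.eval_nodal]
    simp only [Function.comp_apply]
    ring
  let T : Matrix (Fin m) (Fin m) K :=
    Matrix.of fun j i => (p (.inr j) - p (.inl i)) / (x (.inr j) - x (.inl i))
  calc (doubleVandermonde p x).det
      = (Matrix.vandermonde (x ∘ Sum.inl)).det ^ 2 * ((∏ j, ∏ i, (x (.inr j) - x (.inl i))) *
          ((∏ i, Lagrange.nodalWeight Finset.univ (x ∘ Sum.inl) i) * T.det)) := by
        rw [det_doubleVandermonde_eq_lagrangeBasis hinl, ← Matrix.det_mul_row,
          ← Matrix.det_mul_column]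
        simp only [hentry]
        rfl
    _ = (-1) ^ m.choose 2 * (∏ j, ∏ i, (x (.inr j) - x (.inl i))) * T.det := by
        rw [← det_vandermonde_sq_mul_prod_nodalWeight hinl]
        ring

end DoubleVandermonde

section ProdMulDetInv

variable {K m n : Type*} [Field K] [Fintype m] [DecidableEq m] [Fintype n] [DecidableEq n]

/-- The quantity `∏ i, ∏ j, M i j * det (1 / M i j)`, a polynomial in the entries of `M` where these
do not vanish. It is the numerator of the determinant ratios `Hratio`. -/
def prodMulDetInv (M : Matrix m m K) : K :=
  (∏ i, ∏ j, M i j) * (M.map (·⁻¹)).det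

theorem prodMulDetInv_submatrix_equiv (e : n ≃ m) (M : Matrix m m K) :
    prodMulDetInv (M.submatrix e e) = prodMulDetInv M := by
  have hprod : ∏ i, ∏ j, M (e i) (e j) = ∏ i, ∏ j, M i j :=
    Fintype.prod_equiv e _ _ fun i => Fintype.prod_equiv e _ _ fun j => rfl
  have hdet := Matrix.det_submatrix_equiv_self e (M.map (·⁻¹))
  simp only [prodMulDetInv, Matrix.submatrix_apply, hprod, ← hdet, Matrix.submatrix_map]

theorem prodMulDetInv_mul_row_mul_column (r c : m → K) (M : Matrix m m K) :
    prodMulDetInv (Matrix.of fun i j => r i * c j * M i j)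
      = ((∏ i, r i) * ∏ j, c j) ^ Fintype.card m / ((∏ i, r i) * ∏ j, c j) * prodMulDetInv M := by
  have hdet : ((Matrix.of fun i j => r i * c j * M i j).map (·⁻¹)).det
      = (∏ i, (r i)⁻¹) * ((∏ j, (c j)⁻¹) * (M.map (·⁻¹)).det) := by
    rw [← Matrix.det_mul_row, ← Matrix.det_mul_column]
    congr 1
    ext i j
    simp only [Matrix.map_apply, Matrix.of_apply, mul_inv, mul_assoc]
  simp only [prodMulDetInv, hdet, Matrix.of_apply, Finset.prod_mul_distrib, Finset.prod_const,
    Finset.card_univ, Finset.prod_inv_distrib, Finset.prod_pow]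
  ring

/-- The Desnanot–Jacobi identity for the reciprocal matrix. -/
theorem prodMulDetInv_mul_prodMulDetInv_toBlocks₁₁ (M : Matrix (m ⊕ Fin 2) (m ⊕ Fin 2) K) :
    prodMulDetInv M * prodMulDetInv M.toBlocks₁₁
      = M (.inr 0) (.inr 1) * M (.inr 1) (.inr 0) *
          (prodMulDetInv (borderedSubmatrix M 0 0) * prodMulDetInv (borderedSubmatrix M 1 1))
        - M (.inr 0) (.inr 0) * M (.inr 1) (.inr 1) *
          (prodMulDetInv (borderedSubmatrix M 0 1) * prodMulDetInv (borderedSubmatrix M 1 0)) := by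
  have hdet := det_mul_det_toBlocks₁₁ (M.map (·⁻¹))
  have hblock : (M.map (·⁻¹)).toBlocks₁₁ = M.toBlocks₁₁.map (·⁻¹) := rfl
  have hbordered : ∀ i j, borderedSubmatrix (M.map (·⁻¹)) i j
      = (borderedSubmatrix M i j).map (·⁻¹) := fun _ _ => rfl
  simp only [hblock, hbordered] at hdet
  simp only [prodMulDetInv, borderedSubmatrix] at *
  simp only [Matrix.submatrix_apply, Matrix.toBlocks₁₁, Matrix.of_apply, Fintype.prod_sum_type,
    Fin.prod_univ_two, Fin.prod_univ_one, Sum.map_inl, Sum.map_inr, id_eq,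
    Finset.prod_mul_distrib] at hdet ⊢
  linear_combination (∏ i, ∏ j, M (.inl i) (.inl j)) ^ 2 * (∏ i, M (.inl i) (.inr 0)) *
    (∏ i, M (.inl i) (.inr 1)) * (∏ i, M (.inr 0) (.inl i)) * (∏ i, M (.inr 1) (.inl i)) *
    M (.inr 0) (.inr 0) * M (.inr 0) (.inr 1) * M (.inr 1) (.inr 0) * M (.inr 1) (.inr 1) * hdet

theorem prodMulDetInv_div_sub {m : ℕ} (p : Fin m ⊕ Fin m → K) {x : Fin m ⊕ Fin m → K}
    (hx : Function.Injective x) :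
    prodMulDetInv (Matrix.of fun i j =>
        (x (.inr j) - x (.inl i)) / (p (.inr j) - p (.inl i)))
      = (-1) ^ m.choose 2 * (doubleVandermonde p x).det
        / ∏ i, ∏ j, (p (.inr j) - p (.inl i)) := by
  have hdet : ((Matrix.of fun i j =>
      (x (.inr j) - x (.inl i)) / (p (.inr j) - p (.inl i))).map (·⁻¹)).det
        = (Matrix.of fun j i =>
          (p (.inr j) - p (.inl i)) / (x (.inr j) - x (.inl i))).det := by
    rw [← Matrix.det_transpose]
    congr 1
    ext i j
    exact inv_div _ _
  have hsign : (-1 : K) ^ m.choose 2 * (-1) ^ m.choose 2 = 1 := by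
    rw [← mul_pow, neg_one_mul, neg_neg, one_pow]
  rw [det_doubleVandermonde hx, Finset.prod_comm (f := fun j i => x (.inr j) - x (.inl i)),
    ← mul_assoc, ← mul_assoc, hsign, one_mul, prodMulDetInv, hdet]
  simp only [Matrix.of_apply, Finset.prod_div_distrib]
  ring

end ProdMulDetInv

section Vandermonde

theorem vdm_eq_det_vandermonde {k : ℕ} (y : Fin k → ℂ) : vdm y = (Matrix.vandermonde y).det := by
  rw [Matrix.det_vandermonde, vdm]
  refine Finset.prod_congr rfl fun i _ => ?_
  rw [← Finset.prod_filter]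
  exact Finset.prod_congr (by ext; simp) fun _ _ => rfl

theorem vdm_comp_perm {k : ℕ} (y : Fin k → ℂ) (σ : Equiv.Perm (Fin k)) :
    vdm (y ∘ σ) = Equiv.Perm.sign σ * vdm y := by
  rw [vdm_eq_det_vandermonde, vdm_eq_det_vandermonde, ← Matrix.det_permute]
  rfl

theorem vdm_append {k l : ℕ} (a : Fin k → ℂ) (c : Fin l → ℂ) :
    vdm (Fin.append a c) = vdm a * vdm c * ∏ i, ∏ j, (c j - a i) := by
  have hlt : ∀ i j, Fin.castAdd l (i : Fin k) < Fin.natAdd k j := fun i j =>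
    i.isLt.trans_le (Nat.le_add_right k j)
  have hcast : ∀ i j, Fin.castAdd l (i : Fin k) < Fin.castAdd l j ↔ i < j := fun _ _ => Iff.rfl
  simp only [vdm, Fin.prod_univ_add, Fin.append_left, Fin.append_right, hlt, hcast, if_true,
    (hlt _ _).not_gt, if_false, Finset.prod_mul_distrib, Finset.prod_const_one,
    Fin.natAdd_lt_natAdd_iff]
  ring

/-- The identification of two copies of `Fin m` with the index type of a `2m`-tuple. -/
def halvesEquiv (m : ℕ) : Fin m ⊕ Fin m ≃ Fin (2 * m) :=
  finSumFinEquiv.trans (finCongr (two_mul m).symm)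

theorem firstHalf_eq_comp {m : ℕ} (w : Fin (2 * m) → ℂ) :
    firstHalf w = w ∘ halvesEquiv m ∘ Sum.inl := rfl

theorem secondHalf_eq_comp {m : ℕ} (w : Fin (2 * m) → ℂ) :
    secondHalf w = w ∘ halvesEquiv m ∘ Sum.inr := rfl

theorem vdm_eq_firstHalf_secondHalf {m : ℕ} (w : Fin (2 * m) → ℂ) :
    vdm w = vdm (firstHalf w) * vdm (secondHalf w)
      * ∏ i, ∏ j, (secondHalf w j - firstHalf w i) := by
  have hcast : ∀ {n n' : ℕ} (h : n = n') (y : Fin n' → ℂ), vdm (y ∘ Fin.cast h) = vdm y := by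
    rintro n _ rfl y
    rfl
  rw [← vdm_append, ← hcast (two_mul m).symm w]
  exact congrArg vdm (Fin.append_castAdd_natAdd (f := w ∘ Fin.cast (two_mul m).symm)).symm

end Vandermonde

section Symmetry

theorem hpol_comm (ζ a b : ℂ) : hpol ζ a b = hpol ζ b a := by
  rw [hpol, hpol]
  ring

/-- The rational function of which `hpol ζ` is, up to the factor `a * b`, the divided difference;
see `hpol_eq_bezoutFun`. -/
def bezoutFun (ζ w : ℂ) : ℂ := (1 - ζ ^ 2) * w ^ 2 - (3 + ζ ^ 2) * w - w⁻¹

theorem hpol_eq_bezoutFun (ζ : ℂ) {a b : ℂ} (ha : a ≠ 0) (hb : b ≠ 0) (hab : a ≠ b) :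
    hpol ζ a b = a * b * ((bezoutFun ζ b - bezoutFun ζ a) / (b - a)) := by
  have : b - a ≠ 0 := sub_ne_zero.2 hab.symm
  rw [hpol, bezoutFun, bezoutFun]
  field_simp
  ring

/-- A tuple of nonzero numbers which `bezoutFun` separates. Every polynomial `hpol ζ (w i) (w j)`
with `i ≠ j` is then nonzero, and this condition does not depend on the order of the entries. -/
def IsGeneric {ι : Type*} (ζ : ℂ) (w : ι → ℂ) : Prop :=
  (∀ i, w i ≠ 0) ∧ Function.Injective (bezoutFun ζ ∘ w)

namespace IsGeneric

variable {ι κ : Type*} {ζ : ℂ} {w : ι → ℂ}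

theorem comp (hw : IsGeneric ζ w) {f : κ → ι} (hf : Function.Injective f) :
    IsGeneric ζ (w ∘ f) :=
  ⟨fun i => hw.1 (f i), hw.2.comp hf⟩

theorem injective (hw : IsGeneric ζ w) : Function.Injective w := hw.2.of_comp

theorem hpol_eq (hw : IsGeneric ζ w) {i j : ι} (hij : i ≠ j) :
    hpol ζ (w i) (w j)
      = w i * w j * ((bezoutFun ζ (w j) - bezoutFun ζ (w i)) / (w j - w i)) :=
  hpol_eq_bezoutFun ζ (hw.1 i) (hw.1 j) (hw.injective.ne hij)

theorem hpol_ne_zero (hw : IsGeneric ζ w) {i j : ι} (hij : i ≠ j) :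
    hpol ζ (w i) (w j) ≠ 0 := by
  rw [hw.hpol_eq hij]
  exact mul_ne_zero (mul_ne_zero (hw.1 i) (hw.1 j))
    (div_ne_zero (sub_ne_zero.2 (hw.2.ne hij.symm)) (sub_ne_zero.2 (hw.injective.ne hij.symm)))

theorem hratioDefined {m : ℕ} {w : Fin (2 * m) → ℂ} (hw : IsGeneric ζ w) :
    HratioDefined ζ m w := by
  have hhalves := hw.comp (halvesEquiv m).injective
  rw [HratioDefined, firstHalf_eq_comp, secondHalf_eq_comp]
  exact ⟨fun i j hij => hhalves.injective.ne (Sum.inl_injective.ne hij),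
    fun i j hij => hhalves.injective.ne (Sum.inr_injective.ne hij),
    fun i j => hhalves.hpol_ne_zero Sum.inl_ne_inr⟩

/-- The determinant ratio as a quotient of two alternating functions of the `2m`-tuple. -/
theorem hratio_eq {m : ℕ} {w : Fin (2 * m) → ℂ} (hw : IsGeneric ζ w) :
    Hratio ζ m w = (∏ i, w i) ^ m / (∏ i, w i) * ((-1) ^ m.choose 2 *
      (doubleVandermonde (w ∘ halvesEquiv m) (bezoutFun ζ ∘ w ∘ halvesEquiv m)).det / vdm w) := by
  set p := w ∘ halvesEquiv m
  have hp : IsGeneric ζ p := hw.comp (halvesEquiv m).injective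
  have hfirst : firstHalf w = p ∘ Sum.inl := firstHalf_eq_comp w
  have hsecond : secondHalf w = p ∘ Sum.inr := secondHalf_eq_comp w
  have hmatrix : (Matrix.of fun i j => hpol ζ (firstHalf w i) (secondHalf w j))
      = Matrix.of fun i j => p (.inl i) * p (.inr j) * Matrix.of (fun i j =>
        ((bezoutFun ζ ∘ p) (.inr j) - (bezoutFun ζ ∘ p) (.inl i))
          / (p (.inr j) - p (.inl i))) i j := by
    rw [hfirst, hsecond]
    exact Matrix.ext fun i j => hp.hpol_eq Sum.inl_ne_inr
  have hprod : ∏ i, w i = (∏ i, p (.inl i)) * ∏ j, p (.inr j) := by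
    rw [← Fintype.prod_sum_type]
    exact (Equiv.prod_comp (halvesEquiv m) w).symm
  have hvdm : vdm w = vdm (firstHalf w) * vdm (secondHalf w)
      * ∏ i, ∏ j, (p (.inr j) - p (.inl i)) := by
    rw [vdm_eq_firstHalf_secondHalf, hfirst, hsecond]
    rfl
  calc Hratio ζ m w
      = prodMulDetInv (Matrix.of fun i j => hpol ζ (firstHalf w i) (secondHalf w j))
        / (vdm (firstHalf w) * vdm (secondHalf w)) := div_mul_eq_mul_div _ _ _
    _ = (∏ i, w i) ^ m / (∏ i, w i) * ((-1) ^ m.choose 2 *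
          (doubleVandermonde p (bezoutFun ζ ∘ p)).det / vdm w) := by
        rw [hmatrix, prodMulDetInv_mul_row_mul_column, prodMulDetInv_div_sub p hp.2, ← hprod,
          Fintype.card_fin, hvdm]
        simp only [div_eq_mul_inv, mul_inv]
        ring

theorem hratio_comp_perm {m : ℕ} {w : Fin (2 * m) → ℂ} (hw : IsGeneric ζ w)
    (σ : Equiv.Perm (Fin (2 * m))) : Hratio ζ m (w ∘ σ) = Hratio ζ m w := by
  let τ := (halvesEquiv m).permCongr.symm σ
  have hτ : (w ∘ σ) ∘ halvesEquiv m = (w ∘ halvesEquiv m) ∘ τ := by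
    ext i
    simp [τ]
  have hsign : (Equiv.Perm.sign τ : ℂ) = Equiv.Perm.sign σ := by
    rw [← Equiv.Perm.sign_permCongr (halvesEquiv m) τ, Equiv.apply_symm_apply]
  have hdet : (doubleVandermonde ((w ∘ σ) ∘ halvesEquiv m)
      (bezoutFun ζ ∘ (w ∘ σ) ∘ halvesEquiv m)).det = Equiv.Perm.sign σ *
        (doubleVandermonde (w ∘ halvesEquiv m) (bezoutFun ζ ∘ w ∘ halvesEquiv m)).det := by
    rw [hτ, ← hsign, ← det_doubleVandermonde_comp_perm]
    rfl
  have hprod : ∏ i, (w ∘ σ) i = ∏ i, w i := Equiv.prod_comp σ w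
  have hne : (Equiv.Perm.sign σ : ℂ) ≠ 0 :=
    Int.cast_ne_zero.2 (Equiv.Perm.sign σ).ne_zero
  rw [(hw.comp σ.injective).hratio_eq, hw.hratio_eq, hprod, hdet, vdm_comp_perm,
    mul_left_comm, mul_div_mul_left _ _ hne]

end IsGeneric

end Symmetry

section Density

theorem dense_setOf_eval_ne_zero {σ 𝕜 : Type*} [NontriviallyNormedField 𝕜]
    {p : MvPolynomial σ 𝕜} (hp : p ≠ 0) : Dense {z : σ → 𝕜 | MvPolynomial.eval z p ≠ 0} := by
  refine fun z => mem_closure_iff_nhds.2 fun U hU => ?_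
  by_contra hempty
  have hzero : ∀ y ∈ U, MvPolynomial.eval y p = 0 := fun y hy => by
    by_contra hne
    exact hempty ⟨y, hy, hne⟩
  rw [nhds_pi] at hU
  obtain ⟨I, -, t, ht, hIt⟩ := Filter.mem_pi.1 hU
  refine hp (MvPolynomial.funext_set t (fun i => infinite_of_mem_nhds (z i) (ht i)) fun y hy => ?_)
  rw [hzero y (hIt fun i _ => hy i trivial), map_zero]

theorem dense_setOf_isGeneric {ι : Type*} [Finite ι] (ζ : ℂ) :
    Dense {w : ι → ℂ | IsGeneric ζ w} := by
  classical
  cases nonempty_fintype ι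
  -- `w * bezoutFun ζ w` as a polynomial in the `i`-th coordinate `w`.
  let g : ι → MvPolynomial ι ℂ := fun i =>
    .C (1 - ζ ^ 2) * .X i ^ 3 - .C (3 + ζ ^ 2) * .X i ^ 2 - 1
  have hg : ∀ (w : ι → ℂ) i, w i ≠ 0 → MvPolynomial.eval w (g i) = w i * bezoutFun ζ (w i) :=
    fun w i hi => by
      simp only [g, bezoutFun, map_sub, map_mul, map_pow, MvPolynomial.eval_C, MvPolynomial.eval_X,
        map_one]
      field_simp
  have hsub : ∀ i j, i ≠ j → g i * .X j - g j * .X i ≠ 0 := fun i j hij h => by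
    simpa [g, hij] using congrArg (MvPolynomial.eval (Pi.single j 1)) h
  let p : MvPolynomial ι ℂ :=
    (∏ i, .X i) * ∏ i, ∏ j ∈ Finset.univ.erase i, (g i * .X j - g j * .X i)
  have hp : p ≠ 0 := mul_ne_zero
    (Finset.prod_ne_zero_iff.2 fun i _ => MvPolynomial.X_ne_zero i)
    (Finset.prod_ne_zero_iff.2 fun i _ => Finset.prod_ne_zero_iff.2 fun j hj =>
      hsub i j (Finset.ne_of_mem_erase hj).symm)
  refine (dense_setOf_eval_ne_zero hp).mono fun w hw => ?_
  simp only [Set.mem_ofPred_eq, p, map_mul, map_prod, MvPolynomial.eval_X, map_sub, mul_ne_zero_iff,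
    Finset.prod_ne_zero_iff, Finset.mem_univ, true_imp_iff, Finset.mem_erase, and_true] at hw
  refine ⟨hw.1, fun i j hij => ?_⟩
  by_contra hne
  refine hw.2 i j (Ne.symm hne) ?_
  have hbezout : bezoutFun ζ (w i) = bezoutFun ζ (w j) := hij
  rw [hg w i (hw.1 i), hg w j (hw.1 j), hbezout]
  ring

end Density

section JoinHalves

theorem append_eq_comp_symm {α : Type*} {k l : ℕ} (a : Fin k → α) (c : Fin l → α) :
    Fin.append a c = Sum.elim a c ∘ finSumFinEquiv.symm := by
  rw [Equiv.eq_comp_symm]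
  exact Fin.append_comp_sumElim

/-- The `2m`-tuple whose first half is `a` and whose second half is `b`. -/
def joinHalves {α : Type*} {m : ℕ} (a b : Fin m → α) : Fin (2 * m) → α :=
  Sum.elim a b ∘ (halvesEquiv m).symm

@[fun_prop]
theorem continuous_append {X α : Type*} [TopologicalSpace X] [TopologicalSpace α] {k l : ℕ}
    {a : X → Fin k → α} {c : X → Fin l → α} (ha : Continuous a) (hc : Continuous c) :
    Continuous fun z => Fin.append (a z) (c z) := by
  refine continuous_pi fun i => ?_
  induction i using Fin.addCases <;> simp only [Fin.append_left, Fin.append_right] <;> fun_prop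

@[fun_prop]
theorem continuous_joinHalves {X α : Type*} [TopologicalSpace X] [TopologicalSpace α] {m : ℕ}
    {a b : X → Fin m → α} (ha : Continuous a) (hb : Continuous b) :
    Continuous fun z => joinHalves (a z) (b z) := by
  refine continuous_pi ((halvesEquiv m).surjective.forall.2 ?_)
  rintro (i | i) <;> simp only [joinHalves, Function.comp_apply, Equiv.symm_apply_apply,
    Sum.elim_inl, Sum.elim_inr] <;> fun_prop

theorem firstHalf_joinHalves {m : ℕ} (a b : Fin m → ℂ) : firstHalf (joinHalves a b) = a := by
  ext i
  simp [firstHalf_eq_comp, joinHalves]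

theorem secondHalf_joinHalves {m : ℕ} (a b : Fin m → ℂ) : secondHalf (joinHalves a b) = b := by
  ext i
  simp [secondHalf_eq_comp, joinHalves]

theorem joinHalves_firstHalf_secondHalf {m : ℕ} (w : Fin (2 * m) → ℂ) :
    joinHalves (firstHalf w) (secondHalf w) = w := by
  rw [joinHalves, firstHalf_eq_comp, secondHalf_eq_comp, Equiv.comp_symm_eq]
  exact Sum.elim_comp_inl_inr (w ∘ halvesEquiv m)

theorem ofFn_joinHalves {α : Type*} {m : ℕ} (a b : Fin m → α) :
    List.ofFn (joinHalves a b) = List.ofFn a ++ List.ofFn b := by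
  rw [← List.ofFn_fin_append, append_eq_comp_symm, List.ofFn_congr (two_mul m)]
  rfl

theorem ofFn_extL {m n : ℕ} (w : Fin m → ℂ) (l : List ℂ) (h : m + l.length = n) :
    List.ofFn (extL w l : Fin n → ℂ) = List.ofFn w ++ l := by
  subst h
  rw [List.ofFn_add]
  congr 1
  · simp [extL]
  · refine List.ext_getElem (by simp) fun i hi hi' => ?_
    simp [extL]

theorem IsGeneric.joinHalves_append {ζ : ℂ} {k l : ℕ} {a b : Fin k → ℂ} {c d : Fin l → ℂ}
    (hw : IsGeneric ζ (Sum.elim (Sum.elim a c) (Sum.elim b d))) :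
    IsGeneric ζ (joinHalves (Fin.append a c) (Fin.append b d)) := by
  let e : (Fin k ⊕ Fin l) ⊕ (Fin k ⊕ Fin l) ≃ Fin (k + l) ⊕ Fin (k + l) :=
    finSumFinEquiv.sumCongr finSumFinEquiv
  have heq : Sum.elim (Fin.append a c) (Fin.append b d)
      = Sum.elim (Sum.elim a c) (Sum.elim b d) ∘ e.symm := by
    rw [append_eq_comp_symm, append_eq_comp_symm]
    ext (i | i) <;> rfl
  rw [joinHalves, heq]
  exact (hw.comp e.symm.injective).comp (halvesEquiv (k + l)).symm.injective

theorem hratio_joinHalves (ζ : ℂ) {k : ℕ} (a b : Fin k → ℂ) :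
    Hratio ζ k (joinHalves a b)
      = prodMulDetInv (Matrix.of fun i j => hpol ζ (a i) (b j)) / (vdm a * vdm b) := by
  rw [Hratio, firstHalf_joinHalves, secondHalf_joinHalves, div_mul_eq_mul_div]
  rfl

theorem hratio_joinHalves_append (ζ : ℂ) {k l : ℕ} (a b : Fin k → ℂ) (c d : Fin l → ℂ) :
    Hratio ζ (k + l) (joinHalves (Fin.append a c) (Fin.append b d))
      = prodMulDetInv (Matrix.of fun i j => hpol ζ (Sum.elim a c i) (Sum.elim b d j))
        / (vdm (Fin.append a c) * vdm (Fin.append b d)) := by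
  rw [hratio_joinHalves, ← prodMulDetInv_submatrix_equiv finSumFinEquiv.symm]
  simp only [append_eq_comp_symm]
  rfl

theorem vdm_append_mul_vdm {k : ℕ} (a : Fin k → ℂ) (c : Fin 2 → ℂ) :
    vdm (Fin.append a c) * vdm a
      = vdm (Fin.append a ![c 0]) * vdm (Fin.append a ![c 1]) * (c 1 - c 0) := by
  have hpair : vdm c = c 1 - c 0 := by simp [vdm, Fin.prod_univ_two]
  have hsingle : ∀ t : ℂ, vdm ![t] = 1 := fun t => by simp [vdm]
  simp only [vdm_append, hpair, hsingle, Fin.prod_univ_two, Fin.prod_univ_one,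
    Finset.prod_mul_distrib, Matrix.cons_val_fin_one]
  ring

theorem hratio_desnanot_jacobi (ζ : ℂ) {k : ℕ} (a b : Fin k → ℂ) {c d : Fin 2 → ℂ}
    (hc : c 0 ≠ c 1) (hd : d 0 ≠ d 1) :
    (c 0 - c 1) * (d 0 - d 1) * Hratio ζ (k + 2) (joinHalves (Fin.append a c) (Fin.append b d))
        * Hratio ζ k (joinHalves a b)
      = hpol ζ (c 0) (d 1) * hpol ζ (c 1) (d 0)
          * Hratio ζ (k + 1) (joinHalves (Fin.append a ![c 0]) (Fin.append b ![d 0]))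
          * Hratio ζ (k + 1) (joinHalves (Fin.append a ![c 1]) (Fin.append b ![d 1]))
        - hpol ζ (c 0) (d 0) * hpol ζ (c 1) (d 1)
          * Hratio ζ (k + 1) (joinHalves (Fin.append a ![c 0]) (Fin.append b ![d 1]))
          * Hratio ζ (k + 1) (joinHalves (Fin.append a ![c 1]) (Fin.append b ![d 0])) := by
  let M := Matrix.of fun i j => hpol ζ (Sum.elim a c i) (Sum.elim b d j)
  have hblock : M.toBlocks₁₁ = Matrix.of fun i j => hpol ζ (a i) (b j) := rfl
  have hcorner : ∀ i j, M (.inr i) (.inr j) = hpol ζ (c i) (d j) := fun _ _ => rfl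
  have hbordered : ∀ i j,
      Hratio ζ (k + 1) (joinHalves (Fin.append a ![c i]) (Fin.append b ![d j]))
        = prodMulDetInv (borderedSubmatrix M i j)
          / (vdm (Fin.append a ![c i]) * vdm (Fin.append b ![d j])) := fun i j => by
    have hmatrix : borderedSubmatrix M i j
        = Matrix.of fun r s => hpol ζ (Sum.elim a ![c i] r) (Sum.elim b ![d j] s) := by
      ext (r | r) (s | s) <;> simp [M, borderedSubmatrix]
    rw [hratio_joinHalves_append, hmatrix]
  have hvdm : ∀ {a : Fin k → ℂ} {c : Fin 2 → ℂ}, c 0 ≠ c 1 →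
      (c 0 - c 1) / (vdm (Fin.append a c) * vdm a)
        = -(vdm (Fin.append a ![c 0]) * vdm (Fin.append a ![c 1]))⁻¹ := fun {a c} h => by
    rw [vdm_append_mul_vdm, ← neg_sub, neg_div, div_mul_cancel_right₀ (sub_ne_zero.2 h.symm)]
  calc _ = (c 0 - c 1) / (vdm (Fin.append a c) * vdm a)
          * ((d 0 - d 1) / (vdm (Fin.append b d) * vdm b))
          * (prodMulDetInv M * prodMulDetInv M.toBlocks₁₁) := by
        rw [hratio_joinHalves_append, hratio_joinHalves, hblock]
        ring
    _ = _ := by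
        rw [hvdm hc, hvdm hd, prodMulDetInv_mul_prodMulDetInv_toBlocks₁₁]
        simp only [hcorner, hbordered]
        ring

end JoinHalves

section HFamily

theorem exists_perm_comp_eq {α : Type*} {n : ℕ} {w w' : Fin n → α}
    (h : (List.ofFn w).Perm (List.ofFn w')) : ∃ σ : Equiv.Perm (Fin n), w' ∘ σ = w := by
  classical
  have hcard : ∀ (u : Fin n → α) c, Fintype.card {i // u i = c} = (List.ofFn u).count c :=
    fun u c => by
      rw [← Multiset.coe_count, ← Fin.univ_val_map, Multiset.count_map, Fintype.card_subtype]
      simp only [eq_comm (a := c)]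
      rfl
  have hfiber : ∀ c, Nonempty ({i // w i = c} ≃ {i // w' i = c}) := fun c =>
    Fintype.card_eq.1 (by rw [hcard, hcard, h.count_eq])
  exact ⟨Equiv.ofFiberEquiv fun c => (hfiber c).some, funext (Equiv.ofFiberEquiv_map _)⟩

namespace IsHFamily

variable {ζ : ℂ} {H : (k : ℕ) → (Fin (2 * k) → ℂ) → ℂ}

theorem continuous (hH : IsHFamily ζ H) (k : ℕ) : Continuous (H k) := by
  obtain ⟨P, hP⟩ := hH.2.1 k
  simpa only [funext hP] using MvPolynomial.continuous_eval P

theorem eq_hratio (hH : IsHFamily ζ H) {k : ℕ} {w : Fin (2 * k) → ℂ} (hw : IsGeneric ζ w) :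
    H k w = Hratio ζ k w :=
  hH.2.2 k w hw.hratioDefined

theorem comp_perm (hH : IsHFamily ζ H) {k : ℕ} (w : Fin (2 * k) → ℂ)
    (σ : Equiv.Perm (Fin (2 * k))) : H k (w ∘ σ) = H k w := by
  have hcont := hH.continuous k
  have hcomp : Continuous fun w : Fin (2 * k) → ℂ => H k (w ∘ σ) :=
    hcont.comp (Pi.continuous_precomp σ)
  refine congrFun (hcomp.ext_on (dense_setOf_isGeneric ζ) hcont fun w hw => ?_) w
  exact (hH.eq_hratio (hw.comp σ.injective)).trans
    ((hw.hratio_comp_perm σ).trans (hH.eq_hratio hw).symm)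

theorem eq_of_perm (hH : IsHFamily ζ H) {k : ℕ} {w w' : Fin (2 * k) → ℂ}
    (h : (List.ofFn w).Perm (List.ofFn w')) : H k w = H k w' := by
  obtain ⟨σ, rfl⟩ := exists_perm_comp_eq h
  exact hH.comp_perm w' σ

theorem desnanot_jacobi_of_isGeneric (hH : IsHFamily ζ H) {k : ℕ} {a b : Fin k → ℂ}
    {c d : Fin 2 → ℂ} (hw : IsGeneric ζ (Sum.elim (Sum.elim a c) (Sum.elim b d))) :
    (c 0 - c 1) * (d 0 - d 1) * H (k + 2) (joinHalves (Fin.append a c) (Fin.append b d))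
        * H k (joinHalves a b)
      = hpol ζ (c 0) (d 1) * hpol ζ (c 1) (d 0)
          * H (k + 1) (joinHalves (Fin.append a ![c 0]) (Fin.append b ![d 0]))
          * H (k + 1) (joinHalves (Fin.append a ![c 1]) (Fin.append b ![d 1]))
        - hpol ζ (c 0) (d 0) * hpol ζ (c 1) (d 1)
          * H (k + 1) (joinHalves (Fin.append a ![c 0]) (Fin.append b ![d 1]))
          * H (k + 1) (joinHalves (Fin.append a ![c 1]) (Fin.append b ![d 0])) := by
  have hinner : IsGeneric ζ (Sum.elim a b) := by
    convert hw.comp (Sum.map_injective.2 ⟨Sum.inl_injective, Sum.inl_injective⟩) using 1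
    ext (i | i) <;> rfl
  have hbordered : ∀ i j, IsGeneric ζ (Sum.elim (Sum.elim a ![c i]) (Sum.elim b ![d j])) :=
    fun i j => by
      have hborder : ∀ i : Fin 2, Function.Injective
          (Sum.map id fun _ => i : Fin k ⊕ Fin 1 → Fin k ⊕ Fin 2) := fun i =>
        Function.injective_id.sumMap (Function.injective_of_subsingleton _)
      convert hw.comp ((hborder i).sumMap (hborder j)) using 1
      ext ((r | r) | (r | r)) <;> simp
  have hc : c 0 ≠ c 1 := hw.injective.ne (a₁ := .inl (.inr 0)) (a₂ := .inl (.inr 1)) (by simp)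
  have hd : d 0 ≠ d 1 := hw.injective.ne (a₁ := .inr (.inr 0)) (a₂ := .inr (.inr 1)) (by simp)
  have hjoin : H k (joinHalves a b) = Hratio ζ k (joinHalves a b) :=
    hH.eq_hratio (hinner.comp (halvesEquiv k).symm.injective)
  simp only [hjoin, hH.eq_hratio hw.joinHalves_append,
    hH.eq_hratio (hbordered _ _).joinHalves_append]
  exact hratio_desnanot_jacobi ζ a b hc hd

theorem desnanot_jacobi (hH : IsHFamily ζ H) {k : ℕ} (a b : Fin k → ℂ) (c d : Fin 2 → ℂ) :
    (c 0 - c 1) * (d 0 - d 1) * H (k + 2) (joinHalves (Fin.append a c) (Fin.append b d))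
        * H k (joinHalves a b)
      = hpol ζ (c 0) (d 1) * hpol ζ (c 1) (d 0)
          * H (k + 1) (joinHalves (Fin.append a ![c 0]) (Fin.append b ![d 0]))
          * H (k + 1) (joinHalves (Fin.append a ![c 1]) (Fin.append b ![d 1]))
        - hpol ζ (c 0) (d 0) * hpol ζ (c 1) (d 1)
          * H (k + 1) (joinHalves (Fin.append a ![c 0]) (Fin.append b ![d 1]))
          * H (k + 1) (joinHalves (Fin.append a ![c 1]) (Fin.append b ![d 0])) := by
  obtain ⟨z, rfl, rfl, rfl, rfl⟩ : ∃ z : (Fin k ⊕ Fin 2) ⊕ (Fin k ⊕ Fin 2) → ℂ,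
      (fun i => z (.inl (.inl i))) = a ∧ (fun i => z (.inr (.inl i))) = b ∧
      (fun i => z (.inl (.inr i))) = c ∧ (fun i => z (.inr (.inr i))) = d :=
    ⟨Sum.elim (Sum.elim a c) (Sum.elim b d), rfl, rfl, rfl, rfl⟩
  revert z
  have hcont := hH.continuous
  refine isClosed_property (dense_setOf_isGeneric ζ).denseRange_val (isClosed_eq ?_ ?_) fun z =>
    hH.desnanot_jacobi_of_isGeneric (a := fun i => z.1 (.inl (.inl i)))
      (b := fun i => z.1 (.inr (.inl i))) (c := fun i => z.1 (.inl (.inr i)))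
      (d := fun i => z.1 (.inr (.inr i))) ?_
  · fun_prop
  · unfold hpol
    fun_prop
  · have hz : IsGeneric ζ z.1 := z.2
    convert hz using 1
    ext ((i | i) | (i | i)) <;> rfl

theorem extL_eq (hH : IsHFamily ζ H) {k n : ℕ} (w : Fin (2 * k) → ℂ) {l : List ℂ}
    (c d : Fin n → ℂ) (hl : l.Perm (List.ofFn c ++ List.ofFn d)) :
    H (k + n) (extL w l)
      = H (k + n) (joinHalves (Fin.append (firstHalf w) c) (Fin.append (secondHalf w) d)) := by
  have hlength : l.length = 2 * n := by simp [hl.length_eq, two_mul]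
  apply hH.eq_of_perm
  rw [ofFn_extL w l (by omega), ofFn_joinHalves, List.ofFn_fin_append, List.ofFn_fin_append]
  nth_rewrite 1 [← joinHalves_firstHalf_secondHalf w]
  rw [ofFn_joinHalves, ← Multiset.coe_eq_coe]
  have hl' : (l : Multiset ℂ) = List.ofFn c + List.ofFn d := Multiset.coe_eq_coe.2 hl
  simp only [← Multiset.coe_add, hl']
  abel

end IsHFamily

end HFamily

theorem stmt5 (ζ : ℂ) (H : (k : ℕ) → (Fin (2*k) → ℂ) → ℂ) (hH : IsHFamily ζ H)
    (k : ℕ) (hk : 1 ≤ k) (w : Fin (2*k) → ℂ) (x y u v : ℂ) :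
    (x - u) * (y - v) * H (k+2) (extL w [x, y, u, v]) * H k w
      = hpol ζ x v * hpol ζ y u * H (k+1) (extL w [u, v]) * H (k+1) (extL w [x, y])
        - hpol ζ x y * hpol ζ u v * H (k+1) (extL w [y, u]) * H (k+1) (extL w [x, v]) := by
  have hxyuv := hH.extL_eq w (l := [x, y, u, v]) ![x, u] ![y, v]
    (by simpa using List.Perm.swap u y [v])
  have huv := hH.extL_eq w (l := [u, v]) ![u] ![v] (by simp)
  have hxy := hH.extL_eq w (l := [x, y]) ![x] ![y] (by simp)
  have hyu := hH.extL_eq w (l := [y, u]) ![u] ![y] (by simpa using List.Perm.swap u y [])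
  have hxv := hH.extL_eq w (l := [x, v]) ![x] ![v] (by simp)
  have hDJ := hH.desnanot_jacobi (firstHalf w) (secondHalf w) ![x, u] ![y, v]
  simp only [joinHalves_firstHalf_secondHalf, Matrix.cons_val_zero, Matrix.cons_val_one] at hDJ
  rw [hxyuv, huv, hxy, hyu, hxv, hpol_comm ζ y u]
  linear_combination hDJ

end
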